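/- Let R > 0 and 3R/2 ≤ s < t ≤ 2R, let v : ℝ³ → ℝ³ be a smooth vector field and θ : ℝ³ → ℝ a smooth function, and set J₆ = (1/(t−s)) ∫_{B_t ∖ B_s} |v||θ| dx. Let q ∈ [1, 2) and r ∈ [2, 6]. Then there exists a constant C > 0, depending only on q and r (and not on v, θ, R, s, t), such that J₆ ≤ (C/(t−s)) R^{3(1/2 − 1/r)} ‖v‖_{L^q(B_t ∖ B_R)}^{2q/(6−q)} ‖θ‖_{L^r(B_t ∖ B_R)} ‖v‖_{L⁶(B_t ∖ B_R)}^{3(2−q)/(6−q)}. -/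

import Mathlib

open MeasureTheory Filter Metric

noncomputable section

/-- `L^p` norm of a scalar function on a set `E ⊆ ℝ³`. -/
def lpS (g : EuclideanSpace ℝ (Fin 3) → ℝ) (p : ℝ) (E : Set (EuclideanSpace ℝ (Fin 3))) : ℝ :=
  (∫ x in E, |g x| ^ p) ^ (1 / p)

/-!
By Cauchy–Schwarz, `∫ ‖v‖ ‖θ‖ ≤ ‖v‖₂ ‖θ‖₂` on the annulus. Interpolating `L²` between `L^q` and
`L^p` bounds the first factor by `‖v‖_q ^ α * ‖v‖_p ^ β`, where `α + β = 1` and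
`α / q + β / p = 1 / 2`; for `p = 6` this forces `α = 2q / (6 - q)` and `β = 3(2 - q) / (6 - q)`.
Hölder's inequality on the annulus, whose volume is at most a constant times `R ^ d`, bounds
`‖θ‖₂` by a constant times `R ^ (d (1/2 - 1/r)) * ‖θ‖_r`.
-/

open scoped ENNReal

theorem one_div_toReal_sub_one_div_toReal_nonneg {p q : ℝ≥0∞} (hp : 0 < p) (hpq : p ≤ q) :
    0 ≤ 1 / p.toReal - 1 / q.toReal := by
  obtain rfl | hq := eq_or_ne q ∞
  · simp
  · exact sub_nonneg.2 <| one_div_le_one_div_of_le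
      (ENNReal.toReal_pos hp.ne' (ne_top_of_le_ne_top hq hpq)) (ENNReal.toReal_mono hq hpq)

section LpNorm

variable {X F G : Type*} {m : MeasurableSpace X} {μ : Measure X}
  [NormedAddCommGroup F] [NormedAddCommGroup G]

theorem eLpNorm_le_eLpNorm_rpow_mul_eLpNorm_rpow {f : X → F} (hf : AEStronglyMeasurable f μ)
    {p₀ p₁ p : ℝ≥0∞} {α β : ℝ} (hα : 0 ≤ α) (hβ : 0 ≤ β) (hαβ : α + β = 1)
    (hp : ENNReal.ofReal α / p₀ + ENNReal.ofReal β / p₁ = p⁻¹) :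
    eLpNorm f p μ ≤ eLpNorm f p₀ μ ^ α * eLpNorm f p₁ μ ^ β := by
  obtain rfl | hα := hα.eq_or_lt
  · obtain rfl : β = 1 := by simpa using hαβ
    obtain rfl : p₁ = p := by simpa using hp
    simp
  obtain rfl | hβ := hβ.eq_or_lt
  · obtain rfl : α = 1 := by simpa using hαβ
    obtain rfl : p₀ = p := by simpa using hp
    simp
  have norm_rpow_mul (x : X) : ‖f x‖ ^ α * ‖f x‖ ^ β = ‖f x‖ := by
    rw [← Real.rpow_add_of_nonneg (norm_nonneg _) hα.le hβ.le, hαβ, Real.rpow_one]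
  have : ENNReal.HolderTriple (p₀ / ENNReal.ofReal α) (p₁ / ENNReal.ofReal β) p := by
    constructor
    rwa [ENNReal.inv_div (by simp) (by simp [hα]), ENNReal.inv_div (by simp) (by simp [hβ])]
  calc eLpNorm f p μ
      = eLpNorm ((fun x => ‖f x‖ ^ α) • fun x => ‖f x‖ ^ β) p μ := by
        rw [← eLpNorm_norm f]
        exact congrArg (eLpNorm · p μ) (funext fun x => (norm_rpow_mul x).symm)
    _ ≤ eLpNorm (fun x => ‖f x‖ ^ α) (p₀ / ENNReal.ofReal α) μ
          * eLpNorm (fun x => ‖f x‖ ^ β) (p₁ / ENNReal.ofReal β) μ :=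
        eLpNorm_smul_le_mul_eLpNorm (hf.norm.aemeasurable.pow_const β).aestronglyMeasurable
          (hf.norm.aemeasurable.pow_const α).aestronglyMeasurable
    _ = eLpNorm f p₀ μ ^ α * eLpNorm f p₁ μ ^ β := by
        rw [eLpNorm_norm_rpow f hα, eLpNorm_norm_rpow f hβ,
          ENNReal.div_mul_cancel (by simp [hα]) (by simp),
          ENNReal.div_mul_cancel (by simp [hβ]) (by simp)]

theorem memLp_of_interpolation {f : X → F} {p₀ p₁ p : ℝ≥0∞} (hf₀ : MemLp f p₀ μ)
    (hf₁ : MemLp f p₁ μ) {α β : ℝ} (hα : 0 ≤ α) (hβ : 0 ≤ β) (hαβ : α + β = 1)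
    (hp : ENNReal.ofReal α / p₀ + ENNReal.ofReal β / p₁ = p⁻¹) : MemLp f p μ :=
  ⟨hf₀.1, (eLpNorm_le_eLpNorm_rpow_mul_eLpNorm_rpow hf₀.1 hα hβ hαβ hp).trans_lt <|
    ENNReal.mul_lt_top (ENNReal.rpow_lt_top_of_nonneg hα hf₀.eLpNorm_ne_top)
      (ENNReal.rpow_lt_top_of_nonneg hβ hf₁.eLpNorm_ne_top)⟩

theorem lpNorm_le_lpNorm_rpow_mul_lpNorm_rpow {f : X → F} {p₀ p₁ p : ℝ≥0∞}
    (hf₀ : MemLp f p₀ μ) (hf₁ : MemLp f p₁ μ) {α β : ℝ} (hα : 0 ≤ α) (hβ : 0 ≤ β)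
    (hαβ : α + β = 1) (hp : ENNReal.ofReal α / p₀ + ENNReal.ofReal β / p₁ = p⁻¹) :
    lpNorm f p μ ≤ lpNorm f p₀ μ ^ α * lpNorm f p₁ μ ^ β := by
  simp only [← toReal_eLpNorm hf₀.1, ENNReal.toReal_rpow, ← ENNReal.toReal_mul]
  refine ENNReal.toReal_mono (ENNReal.mul_ne_top ?_ ?_)
    (eLpNorm_le_eLpNorm_rpow_mul_eLpNorm_rpow hf₀.1 hα hβ hαβ hp)
  · exact ENNReal.rpow_ne_top_of_nonneg hα hf₀.eLpNorm_ne_top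
  · exact ENNReal.rpow_ne_top_of_nonneg hβ hf₁.eLpNorm_ne_top

theorem lpNorm_le_lpNorm_mul_rpow_measureReal_univ [IsFiniteMeasure μ] {f : X → F}
    {p q : ℝ≥0∞} (hpq : p ≤ q) (hf : MemLp f q μ) :
    lpNorm f p μ ≤ lpNorm f q μ * μ.real Set.univ ^ (1 / p.toReal - 1 / q.toReal) := by
  obtain rfl | hp := eq_zero_or_pos p
  · rw [lpNorm_exponent_zero]
    exact mul_nonneg lpNorm_nonneg (Real.rpow_nonneg measureReal_nonneg _)
  rw [← toReal_eLpNorm hf.1, ← toReal_eLpNorm hf.1, measureReal_def, ENNReal.toReal_rpow,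
    ← ENNReal.toReal_mul]
  exact ENNReal.toReal_mono
    (ENNReal.mul_ne_top hf.eLpNorm_ne_top
      (ENNReal.rpow_ne_top_of_nonneg (one_div_toReal_sub_one_div_toReal_nonneg hp hpq)
        (measure_ne_top μ _)))
    (eLpNorm_le_eLpNorm_mul_rpow_measure_univ hpq hf.1)

theorem integral_norm_mul_norm_le_lpNorm_mul_lpNorm {f : X → F} {g : X → G} {p q : ℝ≥0∞}
    [ENNReal.HolderConjugate p q] (hf : MemLp f p μ) (hg : MemLp g q μ) :
    ∫ x, ‖f x‖ * ‖g x‖ ∂μ ≤ lpNorm f p μ * lpNorm g q μ := by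
  calc ∫ x, ‖f x‖ * ‖g x‖ ∂μ = lpNorm ((‖f ·‖) • (‖g ·‖)) 1 μ := by
        rw [lpNorm_one_eq_integral_norm (hf.1.norm.smul hg.1.norm)]
        simp
    _ ≤ lpNorm f p μ * lpNorm g q μ := by
        rw [← toReal_eLpNorm (hf.1.norm.smul hg.1.norm), ← toReal_eLpNorm hf.1,
          ← toReal_eLpNorm hg.1, ← ENNReal.toReal_mul, ← eLpNorm_norm f, ← eLpNorm_norm g]
        exact ENNReal.toReal_mono
          (ENNReal.mul_ne_top hf.norm.eLpNorm_ne_top hg.norm.eLpNorm_ne_top)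
          (eLpNorm_smul_le_mul_eLpNorm hg.1.norm hf.1.norm)

theorem integral_norm_mul_norm_le_of_interpolation [IsFiniteMeasure μ] {v : X → F} {θ : X → G}
    {q p r : ℝ≥0∞} (hvq : MemLp v q μ) (hvp : MemLp v p μ) (hr : 2 ≤ r) (hθ : MemLp θ r μ)
    {α β : ℝ} (hα : 0 ≤ α) (hβ : 0 ≤ β) (hαβ : α + β = 1)
    (hqp : ENNReal.ofReal α / q + ENNReal.ofReal β / p = 2⁻¹) :
    ∫ x, ‖v x‖ * ‖θ x‖ ∂μ ≤ μ.real Set.univ ^ (1 / 2 - 1 / r.toReal)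
      * lpNorm v q μ ^ α * lpNorm θ r μ * lpNorm v p μ ^ β :=
  calc ∫ x, ‖v x‖ * ‖θ x‖ ∂μ
      ≤ lpNorm v 2 μ * lpNorm θ 2 μ :=
        integral_norm_mul_norm_le_lpNorm_mul_lpNorm
          (memLp_of_interpolation hvq hvp hα hβ hαβ hqp) (hθ.mono_exponent hr)
    _ ≤ (lpNorm v q μ ^ α * lpNorm v p μ ^ β)
          * (lpNorm θ r μ * μ.real Set.univ ^ (1 / 2 - 1 / r.toReal)) := by
        gcongr
        · exact lpNorm_nonneg
        · exact mul_nonneg (Real.rpow_nonneg lpNorm_nonneg _) (Real.rpow_nonneg lpNorm_nonneg _)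
        · exact lpNorm_le_lpNorm_rpow_mul_lpNorm_rpow hvq hvp hα hβ hαβ hqp
        · simpa using lpNorm_le_lpNorm_mul_rpow_measureReal_univ hr hθ
    _ = _ := by ring

end LpNorm

theorem memLp_restrict_of_continuous_of_isBounded {X F : Type*} [PseudoMetricSpace X]
    [ProperSpace X] [MeasurableSpace X] [OpensMeasurableSpace X] [NormedAddCommGroup F]
    (μ : Measure X) [IsFiniteMeasureOnCompacts μ] {f : X → F} (hf : Continuous f) {S : Set X}
    (hS : Bornology.IsBounded S) (p : ℝ≥0∞) : MemLp f p (μ.restrict S) := by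
  have compact_closure : IsCompact (closure S) := hS.isCompact_closure
  have : IsFiniteMeasure (μ.restrict (closure S)) :=
    isFiniteMeasure_restrict.2 compact_closure.measure_ne_top
  obtain ⟨C, hC⟩ := compact_closure.exists_bound_of_continuousOn hf.continuousOn
  have memLp_closure : MemLp f p (μ.restrict (closure S)) :=
    .of_bound hf.aestronglyMeasurable C (ae_restrict_of_forall_mem measurableSet_closure hC)
  exact memLp_closure.mono_measure (Measure.restrict_mono subset_closure le_rfl)

section Ball

variable {E : Type*} [NormedAddCommGroup E] [NormedSpace ℝ E] [FiniteDimensional ℝ E]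
  [MeasurableSpace E] [BorelSpace E] (μ : Measure E) [μ.IsAddHaarMeasure]
  {F G : Type*} [NormedAddCommGroup F] [NormedAddCommGroup G]

theorem rpow_measureReal_le_of_subset_ball {S : Set E} {x : E} {ρ a : ℝ} (hρ : 0 ≤ ρ)
    (hS : S ⊆ ball x ρ) (ha : 0 ≤ a) :
    μ.real S ^ a ≤ μ.real (ball 0 1) ^ a * ρ ^ (Module.finrank ℝ E * a) := by
  have measure_le : μ.real S ≤ ρ ^ Module.finrank ℝ E * μ.real (ball 0 1) := by
    rw [← Measure.addHaar_real_closedBall μ x hρ]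
    exact measureReal_mono (hS.trans ball_subset_closedBall) measure_closedBall_lt_top.ne
  calc μ.real S ^ a
      ≤ (ρ ^ Module.finrank ℝ E * μ.real (ball 0 1)) ^ a :=
        Real.rpow_le_rpow measureReal_nonneg measure_le ha
    _ = μ.real (ball 0 1) ^ a * ρ ^ (Module.finrank ℝ E * a) := by
        rw [Real.mul_rpow (by positivity) measureReal_nonneg, Real.rpow_mul hρ,
          Real.rpow_natCast, mul_comm]

theorem setIntegral_norm_mul_norm_le_of_subset_ball {S A : Set E} {x : E} {ρ : ℝ} (hρ : 0 ≤ ρ)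
    (hSA : S ⊆ A) (hA : A ⊆ ball x ρ) {v : E → F} {θ : E → G} {q p r : ℝ≥0∞}
    (hvq : MemLp v q (μ.restrict A)) (hvp : MemLp v p (μ.restrict A)) (hr : 2 ≤ r)
    (hθ : MemLp θ r (μ.restrict A)) {α β : ℝ} (hα : 0 ≤ α) (hβ : 0 ≤ β) (hαβ : α + β = 1)
    (hqp : ENNReal.ofReal α / q + ENNReal.ofReal β / p = 2⁻¹) :
    ∫ x in S, ‖v x‖ * ‖θ x‖ ∂μ ≤ μ.real (ball 0 1) ^ (1 / 2 - 1 / r.toReal)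
      * ρ ^ (Module.finrank ℝ E * (1 / 2 - 1 / r.toReal)) * lpNorm v q (μ.restrict A) ^ α
      * lpNorm θ r (μ.restrict A) * lpNorm v p (μ.restrict A) ^ β := by
  have : IsFiniteMeasure (μ.restrict A) :=
    isFiniteMeasure_restrict.2 (measure_ne_top_of_subset hA measure_ball_lt_top.ne)
  have integrable_A : IntegrableOn (fun x => ‖v x‖ * ‖θ x‖) A μ :=
    (memLp_of_interpolation hvq hvp hα hβ hαβ hqp).norm.integrable_mul
      (hθ.mono_exponent hr).norm
  have exponent_nonneg : 0 ≤ 1 / 2 - 1 / r.toReal := by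
    simpa using one_div_toReal_sub_one_div_toReal_nonneg two_pos hr
  calc ∫ x in S, ‖v x‖ * ‖θ x‖ ∂μ
      ≤ ∫ x in A, ‖v x‖ * ‖θ x‖ ∂μ :=
        setIntegral_mono_set integrable_A (.of_forall fun x => by positivity) hSA.eventuallyLE
    _ ≤ μ.real A ^ (1 / 2 - 1 / r.toReal) * lpNorm v q (μ.restrict A) ^ α
          * lpNorm θ r (μ.restrict A) * lpNorm v p (μ.restrict A) ^ β := by
        simpa only [measureReal_restrict_apply_univ] using
          integral_norm_mul_norm_le_of_interpolation hvq hvp hr hθ hα hβ hαβ hqp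
    _ ≤ _ := by
        gcongr
        · exact Real.rpow_nonneg lpNorm_nonneg _
        · exact lpNorm_nonneg
        · exact Real.rpow_nonneg lpNorm_nonneg _
        · exact rpow_measureReal_le_of_subset_ball μ hρ hA exponent_nonneg

variable (F G) in
theorem J6_estimate_iv_general {q p r : ℝ≥0∞} (hr : 2 ≤ r) {α β : ℝ} (hα : 0 ≤ α) (hβ : 0 ≤ β)
    (hαβ : α + β = 1) (hqp : ENNReal.ofReal α / q + ENNReal.ofReal β / p = 2⁻¹) :
    ∃ C : ℝ, 0 < C ∧ ∀ (R s t : ℝ) (v : E → F) (θ : E → G), R ≤ s → s < t → t ≤ 2 * R →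
      MemLp v q (μ.restrict (ball 0 t \ ball 0 R)) →
      MemLp v p (μ.restrict (ball 0 t \ ball 0 R)) →
      MemLp θ r (μ.restrict (ball 0 t \ ball 0 R)) →
      (1 / (t - s)) * (∫ x in ball 0 t \ ball 0 s, ‖v x‖ * ‖θ x‖ ∂μ) ≤
        (C / (t - s)) * R ^ (Module.finrank ℝ E * (1 / 2 - 1 / r.toReal))
          * lpNorm v q (μ.restrict (ball 0 t \ ball 0 R)) ^ α
          * lpNorm θ r (μ.restrict (ball 0 t \ ball 0 R))
          * lpNorm v p (μ.restrict (ball 0 t \ ball 0 R)) ^ β := by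
  have unit_ball_pos : 0 < μ.real (ball (0 : E) 1) :=
    ENNReal.toReal_pos (measure_ball_pos μ 0 one_pos).ne' measure_ball_lt_top.ne
  refine ⟨μ.real (ball (0 : E) 1) ^ (1 / 2 - 1 / r.toReal)
    * 2 ^ (Module.finrank ℝ E * (1 / 2 - 1 / r.toReal)), by positivity, ?_⟩
  intro R s t v θ hRs hst ht hvq hvp hθ
  have hR : 0 ≤ R := by linarith
  have : 0 < t - s := sub_pos.2 hst
  have estimate := setIntegral_norm_mul_norm_le_of_subset_ball μ (mul_nonneg zero_le_two hR)
    (Set.sdiff_subset_sdiff_right (ball_subset_ball hRs))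
    (Set.sdiff_subset.trans (ball_subset_ball ht)) hvq hvp hr hθ hα hβ hαβ hqp
  rw [Real.mul_rpow zero_le_two hR] at estimate
  exact (mul_le_mul_of_nonneg_left estimate (by positivity)).trans_eq (by ring)

end Ball

theorem lpS_eq_lpNorm {g : EuclideanSpace ℝ (Fin 3) → ℝ} {p : ℝ} (hp : 0 < p)
    {S : Set (EuclideanSpace ℝ (Fin 3))} (hg : AEStronglyMeasurable g (volume.restrict S)) :
    lpS g p S = lpNorm g (ENNReal.ofReal p) (volume.restrict S) := by
  rw [lpNorm_eq_integral_norm_rpow_toReal (by simpa) ENNReal.ofReal_ne_top hg]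
  simp [lpS, ENNReal.toReal_ofReal hp.le]

theorem lpS_norm_eq_lpNorm {F : Type*} [NormedAddCommGroup F]
    {f : EuclideanSpace ℝ (Fin 3) → F} {p : ℝ} (hp : 0 < p) {S : Set (EuclideanSpace ℝ (Fin 3))}
    (hf : AEStronglyMeasurable f (volume.restrict S)) :
    lpS (fun x => ‖f x‖) p S = lpNorm f (ENNReal.ofReal p) (volume.restrict S) := by
  rw [lpS_eq_lpNorm hp hf.norm, lpNorm_norm hf]

theorem ofReal_interpolation_weights {q : ℝ} (hq0 : 0 < q) (hq2 : q ≤ 2) :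
    ENNReal.ofReal (2 * q / (6 - q)) / ENNReal.ofReal q
      + ENNReal.ofReal (3 * (2 - q) / (6 - q)) / ENNReal.ofReal 6 = 2⁻¹ := by
  have : 0 < 6 - q := by linarith
  have : 0 ≤ 2 - q := sub_nonneg.2 hq2
  rw [← ENNReal.ofReal_div_of_pos hq0, ← ENNReal.ofReal_div_of_pos (by norm_num),
    ← ENNReal.ofReal_add (by positivity) (by positivity), ← ENNReal.ofReal_ofNat 2,
    ← ENNReal.ofReal_inv_of_pos two_pos]
  congr 1
  field_simp
  ring

theorem J6_estimate_iv (q r : ℝ) (hq1 : 1 ≤ q) (hq2 : q < 2) (hr1 : 2 ≤ r) (hr2 : r ≤ 6) :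
    ∃ C : ℝ, 0 < C ∧
      ∀ (R s t : ℝ) (v : EuclideanSpace ℝ (Fin 3) → EuclideanSpace ℝ (Fin 3))
        (θ : EuclideanSpace ℝ (Fin 3) → ℝ),
        0 < R → 3 * R / 2 ≤ s → s < t → t ≤ 2 * R →
        ContDiff ℝ (⊤ : ℕ∞) v → ContDiff ℝ (⊤ : ℕ∞) θ →
        (1 / (t - s)) * (∫ x in ball (0 : EuclideanSpace ℝ (Fin 3)) t \ ball 0 s,
            ‖v x‖ * |θ x|) ≤
          (C / (t - s)) * R ^ (3 * (1 / 2 - 1 / r))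
            * lpS (fun x => ‖v x‖) q (ball 0 t \ ball 0 R) ^ (2 * q / (6 - q))
            * lpS θ r (ball 0 t \ ball 0 R)
            * lpS (fun x => ‖v x‖) 6 (ball 0 t \ ball 0 R) ^ (3 * (2 - q) / (6 - q)) := by
  have hq0 : 0 < q := by linarith
  have hr0 : 0 < r := by linarith
  have : 0 < 2 - q := sub_pos.2 hq2
  have : 0 < 6 - q := by linarith
  have two_le_r : 2 ≤ ENNReal.ofReal r := by simpa using ENNReal.ofReal_le_ofReal hr1
  obtain ⟨C, hC, estimate⟩ := J6_estimate_iv_general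
    (volume : Measure (EuclideanSpace ℝ (Fin 3))) (EuclideanSpace ℝ (Fin 3)) ℝ
    two_le_r (α := 2 * q / (6 - q)) (by positivity) (by positivity) (by field_simp; ring)
    (ofReal_interpolation_weights hq0 hq2.le)
  refine ⟨C, hC, fun R s t v θ _ hs hst ht hv hθ => ?_⟩
  have annulus_bounded : Bornology.IsBounded (ball (0 : EuclideanSpace ℝ (Fin 3)) t \ ball 0 R) :=
    isBounded_ball.subset Set.sdiff_subset
  have memLp_v := memLp_restrict_of_continuous_of_isBounded volume hv.continuous annulus_bounded
  have memLp_θ := memLp_restrict_of_continuous_of_isBounded volume hθ.continuous annulus_bounded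
  rw [lpS_norm_eq_lpNorm hq0 hv.continuous.aestronglyMeasurable,
    lpS_eq_lpNorm hr0 hθ.continuous.aestronglyMeasurable,
    lpS_norm_eq_lpNorm (by norm_num) hv.continuous.aestronglyMeasurable]
  simpa [ENNReal.toReal_ofReal hr0.le] using
    estimate R s t v θ (by linarith) hst ht (memLp_v _) (memLp_v _) (memLp_θ _)
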